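/- arXiv:2006.01062 — 3 statements merged into one kernel-verified Lean document; each statement's English description precedes it below -/
import Mathlib

section
/- Let k ≥ 2 be an integer, let G = (V, E) be a graph, and let X_1, X_2 ⊆ V. Let ~ be a symmetric binary relation on V² (ordered pairs of vertices) such that: (i) for every (u,v) ∈ V² and every w ∈ X_1, the vertex w has at most Δ_1 neighbours z ∈ X_2, and among them at most s_1 satisfy (u,v) ~ (z,w); and (ii) for every (u,v) ∈ V² and every w ∈ X_2, the vertex w has at most Δ_2 neighbours z ∈ X_1, and among them at most s_2 satisfy (u,v) ~ (z,w). Let M = max(Δ_1·s_2, Δ_2·s_1). Then the number of homomorphic 2k-cycles (x_1, x_2, …, x_{2k}) lying in (X_1 × X_2 × X_1 × ⋯ × X_2) ∪ (X_2 × X_1 × X_2 × ⋯ × X_1) such that (x_i, x_{i+1}) ~ (x_j, x_{j+1}) for some i ≠ j is at most 32·k·(k·M·hom(C_{2k−2}, G)·hom(C_{2k}, G))^{1/2}. -/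
/-!
If two edges `(x i, x (i+1))`, `(x j, x (j+1))` of a `2k`-cycle are related, then, since `R` is
symmetric, one of them is among the `k` edges that follow the other. Call the earlier one `(b, c)`
and cut the cycle into the edge `bc`, a walk `Q` of length `k` from `c` to some vertex `a`
containing the related edge, and a walk `P` of length `k - 1` from `a` back to `b`.

Let `f a b` be the number of walks of length `k - 1` from `a` to `b`, and `q a b c` the number of
admissible `Q`. The cycles with `(b, c)` in a fixed position, `b ∈ Y` and `c ∈ Z`, number at most
`∑ f a b * q a b c`, and Cauchy–Schwarz bounds the square of this by the product of
* `∑ (f a b) ^ 2`, over `a`, `b` and the at most `Δ` neighbours `c ∈ Z` of `b`, which is at most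
  `Δ * hom(C_{2k-2})`;
* `∑ (q a b c) ^ 2 ≤ ∑_{a,c} g c a * ∑_b q a b c`, with `g c a` the number of walks of length `k`.
  Given `Q`, each of its `k` edges is related to at most `s` candidates for `b`, so this is at
  most `k * s * ∑ (g c a) ^ 2 ≤ k * s * hom(C_{2k})`.

This is `card_badAt_sq_le`. Summing over the `2k` positions and the two choices
`(Y, Z) = (X₁, X₂), (X₂, X₁)` gives the bound with the constant `4` in place of `32`.
-/

/-- The cyclic successor of an index `i : Fin m`. -/
def nextIdx {m : ℕ} (i : Fin m) : Fin m := ⟨(i.val + 1) % m, Nat.mod_lt _ i.pos⟩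

/-- `homCycles G m` is the number of homomorphic `m`-cycles in `G`, i.e. the number
of homomorphisms from the cycle `C_m` to `G`, with the convention
`homCycles G 0 = |V(G)|`. -/
noncomputable def homCycles {V : Type*} [Fintype V] (G : SimpleGraph V) (m : ℕ) : ℕ :=
  if m = 0 then Fintype.card V
  else Nat.card {x : Fin m → V // ∀ i, G.Adj (x i) (x (nextIdx i))}

/-- `AltIn X₁ X₂ x` means the tuple `x` lies in
`(X₁ × X₂ × X₁ × ⋯ × X₂) ∪ (X₂ × X₁ × X₂ × ⋯ × X₁)`:
its entries alternate between `X₁` and `X₂`, starting in `X₁` or in `X₂`. -/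
def AltIn {V : Type*} {m : ℕ} (X₁ X₂ : Set V) (x : Fin m → V) : Prop :=
  (∀ i : Fin m, (i.val % 2 = 0 → x i ∈ X₁) ∧ (i.val % 2 = 1 → x i ∈ X₂)) ∨
  (∀ i : Fin m, (i.val % 2 = 0 → x i ∈ X₂) ∧ (i.val % 2 = 1 → x i ∈ X₁))

open Finset

/-! ### Pairs of walks with common ends -/

open scoped Classical in
/-- The walks of length `n` from `a` to `b`, as sequences of `n + 1` vertices. -/
noncomputable def walks {V : Type*} [Fintype V] (G : SimpleGraph V) (n : ℕ) (a b : V) :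
    Finset (Fin (n + 1) → V) :=
  univ.filter fun p => p 0 = a ∧ p (Fin.last n) = b ∧
    ∀ i : Fin n, G.Adj (p i.castSucc) (p i.succ)

/-- The closed walk of length `2 * n` that follows `p` and then returns along `p'` reversed. -/
def glue {V : Type*} {n : ℕ} (p p' : Fin (n + 1) → V) (i : Fin (2 * n)) : V :=
  if h : i.val ≤ n then p ⟨i.val, by omega⟩ else p' ⟨2 * n - i.val, by omega⟩

lemma adj_glue {V : Type*} [Fintype V] {G : SimpleGraph V} {n : ℕ} {a b : V}
    {p p' : Fin (n + 1) → V} (hp : p ∈ walks G n a b) (hp' : p' ∈ walks G n a b)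
    (i : Fin (2 * n)) : G.Adj (glue p p' i) (glue p p' (nextIdx i)) := by
  simp only [walks, mem_filter, mem_univ, true_and] at hp hp'
  obtain ⟨hp0, hpn, hpa⟩ := hp
  obtain ⟨hq0, hqn, hqa⟩ := hp'
  obtain ⟨i, hi⟩ := i
  rcases lt_or_ge i n with h | h
  · have e : (i + 1) % (2 * n) = i + 1 := Nat.mod_eq_of_lt (by omega)
    simp only [glue, nextIdx, e]
    rw [dif_pos (by omega), dif_pos (by omega)]
    exact hpa ⟨i, h⟩
  · -- both ends of the edge lie on `p'`, whose ends agree with those of `p`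
    have key : glue p p' ⟨i, hi⟩ = p' ⟨2 * n - i, by omega⟩ := by
      simp only [glue]
      split_ifs with h'
      · obtain rfl : i = n := by omega
        have e : (⟨2 * i - i, by omega⟩ : Fin (i + 1)) = Fin.last i := by
          ext; simp; omega
        rw [e, hqn, ← hpn]; rfl
      · rfl
    have key2 : glue p p' (nextIdx ⟨i, hi⟩) = p' ⟨2 * n - (i + 1), by omega⟩ := by
      rcases eq_or_ne (i + 1) (2 * n) with h2 | h2
      · have e : (i + 1) % (2 * n) = 0 := by rw [h2, Nat.mod_self]
        have e' : (⟨2 * n - (i + 1), by omega⟩ : Fin (n + 1)) = 0 := by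
          ext; simp; omega
        simp only [glue, nextIdx, e]
        rw [dif_pos (by omega), e', hq0, ← hp0]; rfl
      · have e : (i + 1) % (2 * n) = i + 1 := Nat.mod_eq_of_lt (by omega)
        simp only [glue, nextIdx, e]
        rw [dif_neg (by omega)]
    rw [key, key2]
    have := hqa ⟨2 * n - (i + 1), by omega⟩
    have e3 : (⟨2 * n - (i + 1), by omega⟩ : Fin n).succ = ⟨2 * n - i, by omega⟩ := by
      ext; simp; omega
    rw [e3] at this
    exact this.symm

lemma glue_inj {V : Type*} [Fintype V] {G : SimpleGraph V} {n : ℕ} {a b : V}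
    {p p' q q' : Fin (n + 1) → V} (hn : 1 ≤ n) (hp' : p' ∈ walks G n a b)
    (hp : p ∈ walks G n a b) (hq : q ∈ walks G n a b)
    (hq' : q' ∈ walks G n a b) (h : glue p p' = glue q q') : p = q ∧ p' = q' := by
  simp only [walks, mem_filter, mem_univ, true_and] at hp hp' hq hq'
  constructor
  · ext ⟨t, ht⟩
    have := congrFun h ⟨t, by omega⟩
    simp only [glue] at this
    rwa [dif_pos (by omega), dif_pos (by omega)] at this
  · ext ⟨t, ht⟩
    rcases eq_or_ne t 0 with rfl | h0
    · exact hp'.1.trans hq'.1.symm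
    rcases eq_or_ne t n with rfl | h1
    · exact hp'.2.1.trans hq'.2.1.symm
    have := congrFun h ⟨2 * n - t, by omega⟩
    simp only [glue] at this
    rw [dif_neg (by omega), dif_neg (by omega)] at this
    have e : (⟨2 * n - (2 * n - t), by omega⟩ : Fin (n + 1)) = ⟨t, ht⟩ := by
      ext; simp; omega
    rwa [e] at this

/-- Two walks of length `n` with the same ends glue to a homomorphic `2n`-cycle. -/
lemma sum_card_walks_sq_le {V : Type*} [Fintype V] (G : SimpleGraph V) {n : ℕ} (hn : 1 ≤ n) :
    ∑ a, ∑ b, (walks G n a b).card ^ 2 ≤ homCycles G (2 * n) := by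
  classical
  rw [homCycles, if_neg (by omega), Nat.card_eq_fintype_card, Fintype.card_subtype,
    ← Fintype.sum_prod_type' (f := fun a b => (walks G n a b).card ^ 2),
    card_eq_sum_card_fiberwise (f := fun x : Fin (2 * n) → V =>
      (x ⟨0, by omega⟩, x ⟨n, by omega⟩)) (t := univ) (by intro x _; simp)]
  refine sum_le_sum fun ab _ => ?_
  obtain ⟨a, b⟩ := ab
  rw [sq, ← card_product]
  refine card_le_card_of_injOn (fun pp => glue pp.1 pp.2) ?_ ?_
  · rintro ⟨p, p'⟩ hpp
    have hpp := mem_product.1 hpp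
    simp only [coe_filter, mem_filter, mem_univ, true_and, Set.mem_ofPred_eq]
    refine ⟨adj_glue hpp.1 hpp.2, ?_⟩
    have h := hpp.1
    simp only [walks, mem_filter, mem_univ, true_and] at h
    simp only [glue]
    rw [dif_pos (by omega), dif_pos (by omega), ← h.1, ← h.2.1]
    rfl
  · rintro ⟨p, p'⟩ hpp ⟨q, q'⟩ hqq h
    have hpp := mem_product.1 hpp
    have hqq := mem_product.1 hqq
    obtain ⟨rfl, rfl⟩ := glue_inj hn hpp.2 hpp.1 hqq.1 hqq.2 h
    rfl

/-! ### Rotating a cycle -/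

/-- The cycle `x` read periodically, starting from position `j`. -/
def rot {V : Type*} {m : ℕ} (x : Fin m → V) (j : Fin m) (t : ℕ) : V :=
  x ⟨(j.val + t) % m, Nat.mod_lt _ j.pos⟩

lemma rot_zero {V : Type*} {m : ℕ} (x : Fin m → V) (j : Fin m) : rot x j 0 = x j := by
  simp [rot, Nat.mod_eq_of_lt j.isLt]

lemma rot_one {V : Type*} {m : ℕ} (x : Fin m → V) (j : Fin m) : rot x j 1 = x (nextIdx j) := rfl

lemma rot_self {V : Type*} {m : ℕ} (x : Fin m → V) (j : Fin m) : rot x j m = rot x j 0 := by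
  simp [rot]

lemma rot_succ {V : Type*} {m : ℕ} (x : Fin m → V) (j : Fin m) (t : ℕ) :
    rot x j (t + 1) = x (nextIdx ⟨(j.val + t) % m, Nat.mod_lt _ j.pos⟩) := by
  simp [rot, nextIdx, add_assoc]

lemma adj_rot {V : Type*} {G : SimpleGraph V} {m : ℕ} {x : Fin m → V}
    (hx : ∀ i, G.Adj (x i) (x (nextIdx i))) (j : Fin m) (t : ℕ) :
    G.Adj (rot x j t) (rot x j (t + 1)) := by
  rw [rot_succ]; exact hx _

lemma rot_inj {V : Type*} {m : ℕ} {x x' : Fin m → V} (j : Fin m)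
    (h : ∀ t, 1 ≤ t → t ≤ m → rot x j t = rot x' j t) : x = x' := by
  ext ⟨i, hi⟩
  have hj := j.isLt
  rcases lt_or_ge j.val i with hij | hij
  · have := h (i - j) (by omega) (by omega)
    have e : (j.val + (i - j)) % m = i := by
      rw [show j.val + (i - j) = i by omega, Nat.mod_eq_of_lt hi]
    simpa only [rot, e] using this
  · have := h (i + m - j) (by omega) (by omega)
    have e : (j.val + (i + m - j)) % m = i := by
      rw [show j.val + (i + m - j) = i + m by omega, Nat.add_mod_right, Nat.mod_eq_of_lt hi]
    simpa only [rot, e] using this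

/-- Of two distinct related edges of a `2k`-cycle, one is among the `k` edges after the other. -/
lemma exists_rot_related {V : Type*} {k : ℕ} {R : V × V → V × V → Prop}
    (hsymm : ∀ p q, R p q → R q p) {x : Fin (2 * k) → V} {i j : Fin (2 * k)} (hij : i ≠ j)
    (h : R (x i, x (nextIdx i)) (x j, x (nextIdx j))) :
    ∃ j : Fin (2 * k), ∃ t : Fin k,
      R (rot x j (t + 1), rot x j (t + 2)) (rot x j 0, rot x j 1) := by
  wlog hlt : i.val < j.val generalizing i j
  · exact this hij.symm (hsymm _ _ h) (by have := Fin.val_ne_of_ne hij; omega)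
  have hi := i.isLt
  have hj := j.isLt
  by_cases hd : j.val - i.val ≤ k
  · refine ⟨i, ⟨j - i - 1, by omega⟩, ?_⟩
    have e : (⟨(i.val + (j - i - 1 + 1)) % (2 * k), Nat.mod_lt _ i.pos⟩ : Fin (2 * k)) = j := by
      ext; simp only
      rw [show i.val + (j - i - 1 + 1) = j by omega, Nat.mod_eq_of_lt hj]
    rw [rot_zero, rot_one, rot_succ x i (j.val - i - 1 + 1), rot, e]
    exact hsymm _ _ h
  · refine ⟨j, ⟨2 * k - (j - i) - 1, by omega⟩, ?_⟩
    have e : (⟨(j.val + (2 * k - (j - i) - 1 + 1)) % (2 * k), Nat.mod_lt _ j.pos⟩ :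
        Fin (2 * k)) = i := by
      ext; simp only
      rw [show j.val + (2 * k - (j - i) - 1 + 1) = i + 2 * k by omega, Nat.add_mod_right,
        Nat.mod_eq_of_lt hi]
    rw [rot_zero, rot_one, rot_succ x j (2 * k - (j - i) - 1 + 1), rot, e]
    exact h

/-! ### Cycles with a related edge in a fixed position -/

open scoped Classical in
/-- The walks `Q` of length `k` from `c` to `a` having an edge related to `(b, c)`; there are none
unless `b ∈ Y` and `c ∈ Z` are adjacent. -/
noncomputable def relWalks {V : Type*} [Fintype V] (G : SimpleGraph V) (Y Z : Set V)
    (R : V × V → V × V → Prop) (k : ℕ) (a b c : V) : Finset (Fin (k + 1) → V) :=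
  (walks G k c a).filter fun Q => (b ∈ Y ∧ c ∈ Z ∧ G.Adj b c) ∧
    ∃ t : Fin k, R (Q t.castSucc, Q t.succ) (b, c)

open scoped Classical in
/-- The homomorphic `2k`-cycles whose edge at position `j` goes from `Y` to `Z` and is related to
one of the `k` edges after it. -/
noncomputable def badAt {V : Type*} [Fintype V] (G : SimpleGraph V) (Y Z : Set V)
    (R : V × V → V × V → Prop) (k : ℕ) (j : Fin (2 * k)) : Finset (Fin (2 * k) → V) :=
  univ.filter fun x => (∀ i, G.Adj (x i) (x (nextIdx i))) ∧ (rot x j 0 ∈ Y ∧ rot x j 1 ∈ Z) ∧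
    ∃ t : Fin k, R (rot x j (t + 1), rot x j (t + 2)) (rot x j 0, rot x j 1)

/-- A cycle in `badAt` is cut into its edge `(b, c)` at position `j`, the walk of length `n + 1`
from `c` to the vertex `a`, and the walk of length `n` from `a` to `b`. -/
lemma card_badAt_le_sum {V : Type*} [Fintype V] (G : SimpleGraph V) (Y Z : Set V)
    (R : V × V → V × V → Prop) (n : ℕ) (j : Fin (2 * (n + 1))) :
    (badAt G Y Z R (n + 1) j).card ≤
      ∑ v : V × V × V, (walks G n v.1 v.2.1).card *
        (relWalks G Y Z R (n + 1) v.1 v.2.1 v.2.2).card := by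
  classical
  rw [card_eq_sum_card_fiberwise (f := fun x => (rot x j (n + 2), rot x j 0, rot x j 1))
    (t := univ) (by intro x _; simp)]
  refine sum_le_sum fun v _ => ?_
  obtain ⟨a, b, c⟩ := v
  rw [← card_product]
  refine card_le_card_of_injOn
    (fun x => (fun t => rot x j (n + 2 + t), fun t => rot x j (1 + t))) ?_ ?_
  · intro x hx
    simp only [badAt, coe_filter, mem_filter, mem_univ, true_and, Set.mem_ofPred_eq,
      Prod.mk.injEq] at hx
    obtain ⟨⟨hadj, ⟨hY, hZ⟩, t, ht⟩, rfl, rfl, rfl⟩ := hx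
    simp only [coe_product, Set.mem_prod, mem_coe, relWalks, walks, mem_filter, mem_univ,
      true_and]
    refine ⟨⟨rfl, ?_, fun i => adj_rot hadj j _⟩, ⟨rfl, ?_, fun i => adj_rot hadj j _⟩,
      ⟨hY, hZ, adj_rot hadj j 0⟩, t, ?_⟩
    · rw [← rot_self]; congr 1; simp; omega
    · congr 1; simp; omega
    · convert ht using 3 <;> simp <;> omega
  · intro x _ x' _ h
    simp only [Prod.mk.injEq] at h
    refine rot_inj j fun t h1 h2 => ?_
    rcases lt_or_ge t (n + 2) with ht | ht
    · have := congrFun h.2 ⟨t - 1, by omega⟩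
      simpa only [show 1 + (t - 1) = t by omega] using this
    · have := congrFun h.1 ⟨t - (n + 2), by omega⟩
      simpa only [show n + 2 + (t - (n + 2)) = t by omega] using this

/-- Each of the `k` edges of `Q` is related to at most `s` of the edges `(b, c)`. -/
lemma sum_card_relWalks_le {V : Type*} [Fintype V] (G : SimpleGraph V) (Y Z : Set V)
    (R : V × V → V × V → Prop) (k s : ℕ)
    (hs : ∀ (u v : V), ∀ w ∈ Z, ({z : V | z ∈ Y ∧ G.Adj w z ∧ R (u, v) (z, w)}).ncard ≤ s)
    (a c : V) :
    ∑ b, (relWalks G Y Z R k a b c).card ≤ (walks G k c a).card * (k * s) := by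
  classical
  simp only [relWalks, card_filter]
  rw [sum_comm, ← smul_eq_mul, ← sum_const]
  refine sum_le_sum fun Q _ => ?_
  rw [← card_filter]
  by_cases hc : c ∈ Z
  · calc _ ≤ ((univ : Finset (Fin k)).biUnion fun t => univ.filter fun b =>
            b ∈ Y ∧ G.Adj c b ∧ R (Q t.castSucc, Q t.succ) (b, c)).card := by
          refine card_le_card fun b hb => ?_
          simp only [mem_filter, mem_univ, true_and] at hb
          obtain ⟨⟨hY, -, hadj⟩, t, ht⟩ := hb
          simp only [mem_biUnion, mem_filter, mem_univ, true_and]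
          exact ⟨t, hY, hadj.symm, ht⟩
      _ ≤ (univ : Finset (Fin k)).card * s := by
          refine card_biUnion_le_card_mul _ _ _ fun t _ => ?_
          have := hs (Q t.castSucc) (Q t.succ) c hc
          rwa [Set.ncard_eq_toFinset_card', Set.toFinset_ofPred] at this
      _ = k * s := by simp
  · simp [hc]

/-- The Cauchy–Schwarz bound for cycles whose edge at position `j` is related to a later one. -/
lemma card_badAt_sq_le {V : Type*} [Fintype V] (G : SimpleGraph V) (Y Z : Set V)
    (R : V × V → V × V → Prop) (n Δ s : ℕ) (hn : 1 ≤ n)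
    (hΔ : ∀ w ∈ Y, ({z : V | z ∈ Z ∧ G.Adj w z}).ncard ≤ Δ)
    (hs : ∀ (u v : V), ∀ w ∈ Z, ({z : V | z ∈ Y ∧ G.Adj w z ∧ R (u, v) (z, w)}).ncard ≤ s)
    (j : Fin (2 * (n + 1))) :
    (badAt G Y Z R (n + 1) j).card ^ 2 ≤
      (Δ * homCycles G (2 * n)) * ((n + 1) * s * homCycles G (2 * (n + 1))) := by
  classical
  let f : V × V × V → ℕ := fun v =>
    if v.2.1 ∈ Y ∧ v.2.2 ∈ Z ∧ G.Adj v.2.1 v.2.2 then (walks G n v.1 v.2.1).card else 0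
  let q : V × V × V → ℕ := fun v => (relWalks G Y Z R (n + 1) v.1 v.2.1 v.2.2).card
  have h1 : (badAt G Y Z R (n + 1) j).card ≤ ∑ v, f v * q v := by
    refine (card_badAt_le_sum G Y Z R n j).trans (sum_le_sum fun v _ => ?_)
    simp only [f, q]
    split_ifs with h
    · exact le_rfl
    · simp [relWalks, h]
  have hf : ∑ v, f v ^ 2 ≤ Δ * homCycles G (2 * n) := by
    refine le_trans ?_ (Nat.mul_le_mul_left Δ (sum_card_walks_sq_le G hn))
    simp only [Fintype.sum_prod_type, mul_sum]
    refine sum_le_sum fun a _ => sum_le_sum fun b _ => ?_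
    by_cases hb : b ∈ Y
    · have := hΔ b hb
      rw [Set.ncard_eq_toFinset_card', Set.toFinset_ofPred] at this
      simp only [f, hb, true_and, ite_pow, ne_eq, OfNat.ofNat_ne_zero, not_false_eq_true,
        zero_pow]
      rw [← sum_filter, sum_const, smul_eq_mul]
      exact Nat.mul_le_mul_right _ this
    · simp [f, hb]
  have hq : ∑ v, q v ^ 2 ≤ (n + 1) * s * homCycles G (2 * (n + 1)) := by
    refine le_trans ?_ (Nat.mul_le_mul_left _ (sum_card_walks_sq_le G (n := n + 1) (by omega)))
    rw [sum_comm]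
    simp only [Fintype.sum_prod_type, mul_sum]
    refine sum_le_sum fun a _ => ?_
    rw [sum_comm]
    refine sum_le_sum fun c _ => ?_
    calc ∑ b, q (a, b, c) ^ 2
        ≤ ∑ b, (walks G (n + 1) c a).card * q (a, b, c) := by
          refine sum_le_sum fun b _ => ?_
          rw [sq]
          exact Nat.mul_le_mul_right _ (card_filter_le _ _)
      _ ≤ (walks G (n + 1) c a).card * ((walks G (n + 1) c a).card * ((n + 1) * s)) := by
          rw [← mul_sum]
          exact Nat.mul_le_mul_left _ (sum_card_relWalks_le G Y Z R (n + 1) s hs a c)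
      _ = _ := by ring
  calc _ ≤ (∑ v, f v * q v) ^ 2 := Nat.pow_le_pow_left h1 2
    _ ≤ (∑ v, f v ^ 2) * ∑ v, q v ^ 2 := sum_mul_sq_le_sq_mul_sq _ _ _
    _ ≤ _ := Nat.mul_le_mul hf hq

/-! ### Summing over positions -/

/-- **Key lemma, most general form.**
The number of alternating homomorphic `2k`-cycles containing two `R`-related
edge-pairs is at most `32·k·(k·M·hom(C_{2k−2},G)·hom(C_{2k},G))^{1/2}`, where
`M = max(Δ₁·s₂, Δ₂·s₁)`. -/
theorem count_alternating_cycles_general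
    (k : ℕ) (hk : 2 ≤ k)
    (V : Type) [Fintype V] (G : SimpleGraph V) (X₁ X₂ : Set V)
    (Δ₁ Δ₂ s₁ s₂ : ℕ) (R : V × V → V × V → Prop)
    (hsymm : ∀ p q, R p q → R q p)
    (h1 : ∀ (u v : V), ∀ w ∈ X₁,
      ({z : V | z ∈ X₂ ∧ G.Adj w z}).ncard ≤ Δ₁ ∧
      ({z : V | z ∈ X₂ ∧ G.Adj w z ∧ R (u, v) (z, w)}).ncard ≤ s₁)
    (h2 : ∀ (u v : V), ∀ w ∈ X₂,
      ({z : V | z ∈ X₁ ∧ G.Adj w z}).ncard ≤ Δ₂ ∧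
      ({z : V | z ∈ X₁ ∧ G.Adj w z ∧ R (u, v) (z, w)}).ncard ≤ s₂) :
    (Nat.card {x : Fin (2 * k) → V //
        (∀ i, G.Adj (x i) (x (nextIdx i))) ∧ AltIn X₁ X₂ x ∧
        ∃ i j, i ≠ j ∧ R (x i, x (nextIdx i)) (x j, x (nextIdx j))} : ℝ) ≤
      32 * (k : ℝ) *
        ((k : ℝ) * (max (Δ₁ * s₂) (Δ₂ * s₁) : ℝ) *
          (homCycles G (2 * k - 2) : ℝ) * (homCycles G (2 * k) : ℝ)) ^ ((1 : ℝ) / 2) := by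
  classical
  obtain ⟨n, rfl⟩ : ∃ n, k = n + 1 := ⟨k - 1, by omega⟩
  rw [show 2 * (n + 1) - 2 = 2 * n by omega, ← Real.sqrt_eq_rpow]
  set A := homCycles G (2 * n)
  set B := homCycles G (2 * (n + 1))
  set S := Real.sqrt (((n + 1 : ℕ) : ℝ) * max ((Δ₁ : ℝ) * s₂) ((Δ₂ : ℝ) * s₁) * A * B) with hS
  have hbound : ∀ (c : Finset (Fin (2 * (n + 1)) → V)) (Δ s : ℕ),
      ((Δ : ℝ) * s ≤ max ((Δ₁ : ℝ) * s₂) ((Δ₂ : ℝ) * s₁)) →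
      c.card ^ 2 ≤ (Δ * A) * ((n + 1) * s * B) → (c.card : ℝ) ≤ S := by
    intro c Δ s hM hc
    refine Real.le_sqrt_of_sq_le ?_
    calc (c.card : ℝ) ^ 2 ≤ (Δ * A) * ((n + 1) * s * B) := by exact_mod_cast hc
      _ = ((n + 1 : ℕ) : ℝ) * ((Δ : ℝ) * s) * A * B := by push_cast; ring
      _ ≤ _ := by gcongr
  have h12 : ∀ j, ((badAt G X₁ X₂ R (n + 1) j).card : ℝ) ≤ S := fun j =>
    hbound _ Δ₁ s₂ (le_max_left _ _) (card_badAt_sq_le G X₁ X₂ R n Δ₁ s₂ (by omega)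
      (fun w hw => (h1 w w w hw).1) (fun u v w hw => (h2 u v w hw).2) j)
  have h21 : ∀ j, ((badAt G X₂ X₁ R (n + 1) j).card : ℝ) ≤ S := fun j =>
    hbound _ Δ₂ s₁ (le_max_right _ _) (card_badAt_sq_le G X₂ X₁ R n Δ₂ s₁ (by omega)
      (fun w hw => (h2 w w w hw).1) (fun u v w hw => (h1 u v w hw).2) j)
  have hcount : Nat.card {x : Fin (2 * (n + 1)) → V //
        (∀ i, G.Adj (x i) (x (nextIdx i))) ∧ AltIn X₁ X₂ x ∧
        ∃ i j, i ≠ j ∧ R (x i, x (nextIdx i)) (x j, x (nextIdx j))} ≤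
      ∑ j, ((badAt G X₁ X₂ R (n + 1) j).card + (badAt G X₂ X₁ R (n + 1) j).card) := by
    rw [Nat.card_eq_fintype_card, Fintype.card_subtype]
    calc _ ≤ ((univ : Finset (Fin (2 * (n + 1)))).biUnion fun j =>
            badAt G X₁ X₂ R (n + 1) j ∪ badAt G X₂ X₁ R (n + 1) j).card := by
          refine card_le_card fun x hx => ?_
          simp only [mem_filter, mem_univ, true_and] at hx
          obtain ⟨hadj, halt, i, j, hij, hR⟩ := hx
          obtain ⟨j, t, ht⟩ := exists_rot_related hsymm hij hR
          simp only [mem_biUnion, mem_union, badAt, mem_filter, mem_univ, true_and]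
          refine ⟨j, ?_⟩
          have hmem : (rot x j 0 ∈ X₁ ∧ rot x j 1 ∈ X₂) ∨ (rot x j 0 ∈ X₂ ∧ rot x j 1 ∈ X₁) := by
            rw [rot_zero, rot_one]
            -- reduction modulo the even number `2 * (n + 1)` preserves parity
            have hpar : (nextIdx j).val % 2 = (j.val + 1) % 2 :=
              Nat.mod_mod_of_dvd _ ⟨n + 1, rfl⟩
            rcases Nat.mod_two_eq_zero_or_one j.val with h0 | h0 <;> rcases halt with h | h
            · exact Or.inl ⟨(h j).1 h0, (h _).2 (by omega)⟩
            · exact Or.inr ⟨(h j).1 h0, (h _).2 (by omega)⟩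
            · exact Or.inr ⟨(h j).2 h0, (h _).1 (by omega)⟩
            · exact Or.inl ⟨(h j).2 h0, (h _).1 (by omega)⟩
          exact hmem.imp (fun h => ⟨hadj, h, t, ht⟩) (fun h => ⟨hadj, h, t, ht⟩)
      _ ≤ _ := card_biUnion_le.trans (sum_le_sum fun j _ => card_union_le _ _)
  have hS0 : 0 ≤ S := Real.sqrt_nonneg _
  calc _ ≤ ((∑ j, ((badAt G X₁ X₂ R (n + 1) j).card +
        (badAt G X₂ X₁ R (n + 1) j).card) : ℕ) : ℝ) := by exact_mod_cast hcount
    _ ≤ ∑ _j : Fin (2 * (n + 1)), (S + S) := by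
        push_cast
        exact sum_le_sum fun j _ => add_le_add (h12 j) (h21 j)
    _ = 4 * ((n + 1 : ℕ) : ℝ) * S := by
        simp only [sum_const, card_univ, Fintype.card_fin, nsmul_eq_mul]
        push_cast; ring
    _ ≤ 32 * ((n + 1 : ℕ) : ℝ) * S := by gcongr; norm_num
end

section
/- For all integers k ≥ 2 and 0 ≤ ℓ ≤ k−1 and every finite graph G, hom(C_{2k−2}, G) ≤ hom(C_{2ℓ}, G)^{1/(k−ℓ)} · hom(C_{2k}, G)^{1 − 1/(k−ℓ)}. -/
/-- Expansion of the entries of `A ^ n` as a sum over vertex sequences of length `n + 1`. The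
endpoints are tested against an arbitrary function `f` so that the induction on `n` can absorb the
last step of the sequence into `f`. -/
theorem sum_pow_apply {V : Type*} [Fintype V] [DecidableEq V] (A : Matrix V V ℝ) (n : ℕ)
    (f : V → V → ℝ) :
    ∑ u, ∑ v, f u v * (A ^ n) u v =
      ∑ x : Fin (n + 1) → V, f (x 0) (x (Fin.last n)) * ∏ i : Fin n, A (x i.castSucc) (x i.succ) := by
  induction n generalizing f with
  | zero =>
    rw [← (Equiv.funUnique (Fin 1) V).symm.sum_comp]
    simp [Matrix.one_apply]
  | succ n ih =>
    have h := ih (fun u w => ∑ v, f u v * A w v)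
    have hL : ∑ u, ∑ v, f u v * (A ^ (n + 1)) u v =
        ∑ u, ∑ w, (∑ v, f u v * A w v) * (A ^ n) u w := by
      refine Finset.sum_congr rfl fun u _ => ?_
      simp only [pow_succ, Matrix.mul_apply, Finset.mul_sum, Finset.sum_mul]
      rw [Finset.sum_comm]
      refine Finset.sum_congr rfl fun w _ => Finset.sum_congr rfl fun v _ => ?_
      ring
    rw [hL, h, ← (Fin.snocEquiv (fun _ : Fin (n + 2) => V)).sum_comp, Fintype.sum_prod_type,
      Finset.sum_comm]
    refine Finset.sum_congr rfl fun x _ => ?_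
    rw [Finset.sum_mul]
    refine Finset.sum_congr rfl fun v _ => ?_
    have h0 : (Fin.snoc x v : Fin (n + 2) → V) 0 = x 0 :=
      Fin.snoc_castSucc (α := fun _ => V) v x 0
    have h1 (i : Fin n) : (Fin.snoc x v : Fin (n + 2) → V) i.castSucc.succ = x i.succ :=
      Fin.snoc_castSucc (α := fun _ => V) v x i.succ
    have h2 (i : Fin (n + 1)) : (Fin.snoc x v : Fin (n + 2) → V) i.castSucc = x i :=
      Fin.snoc_castSucc (α := fun _ => V) v x i
    have h3 : (Fin.snoc x v : Fin (n + 2) → V) (Fin.last (n + 1)) = v :=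
      Fin.snoc_last (α := fun _ => V) v x
    simp only [Fin.snocEquiv, Equiv.coe_fn_mk]
    rw [Fin.prod_univ_castSucc, Fin.succ_last]
    simp only [h0, h1, h2, h3]
    ring

theorem trace_adjMatrix_pow {V : Type*} [Fintype V] [DecidableEq V] (G : SimpleGraph V)
    [DecidableRel G.Adj] (m : ℕ) :
    (homCycles G m : ℝ) = ((G.adjMatrix ℝ) ^ m).trace := by
  cases m with
  | zero => simp [homCycles]
  | succ n =>
    set A := G.adjMatrix ℝ with hA
    have h : (A ^ (n + 1)).trace = ∑ u, ∑ v, A v u * (A ^ n) u v := by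
      simp only [pow_succ, Matrix.trace, Matrix.diag, Matrix.mul_apply, mul_comm]
    rw [h, sum_pow_apply A n (fun u v => A v u)]
    have hprod (x : Fin (n + 1) → V) :
        A (x (Fin.last n)) (x 0) * ∏ i : Fin n, A (x i.castSucc) (x i.succ) =
          if ∀ i, G.Adj (x i) (x (nextIdx i)) then 1 else 0 := by
      have hlast : nextIdx (Fin.last n) = 0 := by
        apply Fin.ext; simp [nextIdx]
      have hcast (i : Fin n) : nextIdx i.castSucc = i.succ := by
        apply Fin.ext
        simp [nextIdx, Nat.mod_eq_of_lt]
      have : A (x (Fin.last n)) (x 0) * ∏ i : Fin n, A (x i.castSucc) (x i.succ) =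
          ∏ i : Fin (n + 1), A (x i) (x (nextIdx i)) := by
        rw [Fin.prod_univ_castSucc, hlast, mul_comm]
        simp only [hcast]
      rw [this]
      simp only [hA, SimpleGraph.adjMatrix_apply]
      rw [Finset.prod_ite_zero]
      simp
    simp only [hprod]
    rw [Finset.sum_boole, homCycles, if_neg (Nat.succ_ne_zero n), Nat.card_eq_fintype_card,
      Fintype.card_subtype]

theorem trace_pow_eq_sum_eigenvalues_pow {V : Type*} [Fintype V] [DecidableEq V]
    {A : Matrix V V ℝ} (hA : A.IsHermitian) (m : ℕ) :
    (A ^ m).trace = ∑ i, hA.eigenvalues i ^ m := by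
  conv_lhs => rw [hA.spectral_theorem, ← map_pow, Unitary.conjStarAlgAut_apply,
    Matrix.trace_mul_cycle, Unitary.coe_star_mul_self, one_mul, Matrix.diagonal_pow,
    Matrix.trace_diagonal]
  simp

/-- For all integers `k ≥ 2` and `0 ≤ ℓ ≤ k−1` and any finite graph `G`,
`hom(C_{2k−2}, G) ≤ hom(C_{2ℓ}, G)^{1/(k−ℓ)} · hom(C_{2k}, G)^{1−1/(k−ℓ)}`. -/
theorem homCycles_interpolation (k ℓ : ℕ) (hk : 2 ≤ k) (hl : ℓ ≤ k - 1)
    (V : Type) [Fintype V] (G : SimpleGraph V) :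
    (homCycles G (2 * k - 2) : ℝ) ≤
      (homCycles G (2 * ℓ) : ℝ) ^ (1 / ((k : ℝ) - (ℓ : ℝ))) *
      (homCycles G (2 * k) : ℝ) ^ (1 - 1 / ((k : ℝ) - (ℓ : ℝ))) := by
  classical
  have hA : (G.adjMatrix ℝ).IsHermitian := G.isHermitian_adjMatrix ℝ
  simp only [trace_adjMatrix_pow, trace_pow_eq_sum_eigenvalues_pow hA]
  set μ := hA.eigenvalues
  obtain ⟨d, rfl⟩ : ∃ d, k = ℓ + (d + 1) := ⟨k - ℓ - 1, by omega⟩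
  have hp : ((ℓ + (d + 1) : ℕ) : ℝ) - (ℓ : ℝ) = ((d + 1 : ℕ) : ℝ) := by push_cast; ring
  rw [hp, one_div]
  have hp1 : (1 : ℝ) ≤ ((d + 1 : ℕ) : ℝ) := by exact_mod_cast Nat.le_add_left 1 d
  have key := Real.inner_le_weight_mul_Lp_of_nonneg Finset.univ hp1
    (fun i => μ i ^ (2 * (ℓ + (d + 1)))) (fun i => (μ i ^ 2)⁻¹)
    (fun i => (even_two_mul _).pow_nonneg _) (fun i => by positivity)
  have hsum : ∑ i, μ i ^ (2 * (ℓ + (d + 1)) - 2) =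
      ∑ i, μ i ^ (2 * (ℓ + (d + 1))) * (μ i ^ 2)⁻¹ := by
    refine Finset.sum_congr rfl fun i _ => ?_
    -- For a zero eigenvalue both sides vanish, because `k ≥ 2` makes `2 * k - 2` positive.
    by_cases h : μ i = 0
    · rw [h, zero_pow (by omega), zero_pow (by omega), zero_mul]
    · rw [pow_sub₀ _ h (by omega)]
  rw [hsum, mul_comm ((∑ i, μ i ^ (2 * ℓ)) ^ _)]
  refine key.trans ?_
  have hnn : 0 ≤ ∑ i, μ i ^ (2 * (ℓ + (d + 1))) :=
    Finset.sum_nonneg fun i _ => (even_two_mul _).pow_nonneg _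
  refine mul_le_mul_of_nonneg_left ?_ (Real.rpow_nonneg hnn _)
  refine Real.rpow_le_rpow (Finset.sum_nonneg fun i _ =>
    mul_nonneg ((even_two_mul _).pow_nonneg _) (by positivity)) ?_ (by positivity)
  refine Finset.sum_le_sum fun i _ => ?_
  -- Only an inequality: when `ℓ = 0`, a zero eigenvalue contributes `0` on the left, `1` on the
  -- right.
  by_cases h : μ i = 0
  · rw [h, zero_pow (by omega), zero_mul]
    exact (even_two_mul ℓ).pow_nonneg _
  · refine le_of_eq ?_
    rw [Real.rpow_natCast, inv_pow, ← pow_mul, Nat.mul_add, pow_add, mul_assoc,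
      mul_inv_cancel₀ (pow_ne_zero _ h), mul_one]
end

section
/- Let G be a bipartite graph with non-empty parts X and Y, and let s, t be nonnegative reals such that every vertex x ∈ X has degree at least s in G and every vertex y ∈ Y has degree at least t in G. Then for every positive integer k, hom(C_{2k}, G) ≥ s^k · t^k. -/
open Matrix in
/-- If the Rayleigh quotient of `A ^ 2` at some nonzero vector is at least `c`, then `A` has an
eigenvalue whose square is at least `c`, and its contribution to `tr (A ^ (2 * k))` is at least
`c ^ k`. -/
lemma pow_le_trace_pow {n : Type*} [Fintype n] [DecidableEq n] {A : Matrix n n ℝ}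
    (hA : A.IsHermitian) (v : n → ℝ) (hv : v ≠ 0) {c : ℝ} (hc : 0 ≤ c)
    (h : c * (v ⬝ᵥ v) ≤ (A *ᵥ v) ⬝ᵥ (A *ᵥ v)) (k : ℕ) :
    c ^ k ≤ (A ^ (2 * k)).trace := by
  set U : Matrix n n ℝ := (hA.eigenvectorUnitary : Matrix n n ℝ) with hU
  set lam := hA.eigenvalues with hlam
  have hUU : Uᵀ * U = 1 := by
    have := Unitary.coe_star_mul_self hA.eigenvectorUnitary
    rwa [star_eq_conjTranspose, conjTranspose_eq_transpose_of_trivial] at this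
  have hUU' : U * Uᵀ = 1 := mul_eq_one_comm.mp hUU
  have hspec : A = U * diagonal lam * Uᵀ := by
    have := hA.spectral_theorem
    rw [Unitary.conjStarAlgAut_apply, star_eq_conjTranspose,
      conjTranspose_eq_transpose_of_trivial] at this
    exact this
  have hpow : ∀ m : ℕ, A ^ m = U * diagonal (lam ^ m) * Uᵀ := by
    intro m
    induction m with
    | zero => simp [hUU']
    | succ m ih =>
      calc A ^ (m + 1) = U * diagonal (lam ^ m) * Uᵀ * (U * diagonal lam * Uᵀ) := by
            rw [pow_succ, ih, ← hspec]
        _ = U * diagonal (lam ^ m) * (Uᵀ * U) * diagonal lam * Uᵀ := by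
            simp only [Matrix.mul_assoc]
        _ = _ := by
            rw [hUU, Matrix.mul_one, Matrix.mul_assoc U, diagonal_mul_diagonal]
            rfl
  have htr : (A ^ (2 * k)).trace = ∑ i, lam i ^ (2 * k) := by
    rw [hpow, Matrix.trace_mul_comm, ← Matrix.mul_assoc, hUU, Matrix.one_mul, trace_diagonal]
    rfl
  have hiso : ∀ a : n → ℝ, (U *ᵥ a) ⬝ᵥ (U *ᵥ a) = a ⬝ᵥ a := by
    intro a
    rw [dotProduct_mulVec, vecMul_mulVec, hUU, vecMul_one]
  -- `w` holds the coordinates of `v` in the orthonormal eigenbasis.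
  set w := Uᵀ *ᵥ v with hw
  have hvw : v = U *ᵥ w := by rw [hw, mulVec_mulVec, hUU', one_mulVec]
  have hAv : A *ᵥ v = U *ᵥ (diagonal lam *ᵥ w) := by
    rw [hw, mulVec_mulVec, mulVec_mulVec, ← hspec]
  rw [hAv, hiso, hvw, hiso] at h
  have hw0 : w ≠ 0 := by
    intro h0
    apply hv
    rw [hvw, h0, mulVec_zero]
  obtain ⟨i, hi⟩ : ∃ i, c ≤ lam i ^ 2 := by
    by_contra! hlt
    obtain ⟨j, hj⟩ := Function.ne_iff.mp hw0
    refine absurd h (not_le.mpr ?_)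
    simp only [dotProduct, mulVec_diagonal, Finset.mul_sum]
    refine Finset.sum_lt_sum (fun i _ => ?_) ⟨j, Finset.mem_univ _, ?_⟩
    · nlinarith [mul_self_nonneg (w i), hlt i]
    · nlinarith [mul_self_pos.mpr hj, hlt j]
  rw [htr]
  calc c ^ k ≤ (lam i ^ 2) ^ k := pow_le_pow_left₀ hc hi k
    _ = lam i ^ (2 * k) := by rw [pow_mul]
    _ ≤ ∑ i, lam i ^ (2 * k) :=
      Finset.single_le_sum (f := fun i => lam i ^ (2 * k))
        (fun i _ => (even_two_mul k).pow_nonneg _) (Finset.mem_univ i)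

open Classical in
/-- A closed walk of length `m` is determined by its sequence of vertices, which is a homomorphic
`m`-cycle. -/
lemma trace_adjMatrix_pow_le_homCycles {V : Type*} [Fintype V] (G : SimpleGraph V)
    {m : ℕ} (hm : 0 < m) :
    (G.adjMatrix ℝ ^ m).trace ≤ (homCycles G m : ℝ) := by
  have h1 : (G.adjMatrix ℝ ^ m).trace
      = (Fintype.card (Σ u : V, {p : G.Walk u u | p.length = m}) : ℝ) := by
    rw [Fintype.card_sigma, Matrix.trace]
    push_cast
    exact Finset.sum_congr rfl fun u _ => G.adjMatrix_pow_apply_eq_card_walk m u u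
  rw [h1, homCycles, if_neg hm.ne', ← Nat.card_eq_fintype_card]
  norm_cast
  refine Nat.card_le_card_of_injective
    (fun q => ⟨fun i => q.2.1.getVert i, fun i => ?_⟩) ?_
  · obtain ⟨u, p, hp⟩ := q
    simp only [Set.mem_ofPred_eq] at hp
    have hadj := p.adj_getVert_succ (i := i) (by omega)
    rcases Nat.lt_or_ge (i.1 + 1) m with hi | hi
    · simpa [nextIdx, Nat.mod_eq_of_lt hi] using hadj
    · -- At the last index the cycle wraps around, and the walk returns to its base point.
      have him : i.1 + 1 = m := by omega
      have hlast : p.getVert (i.1 + 1) = u := by rw [him, ← hp, p.getVert_length]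
      rw [hlast] at hadj
      simpa [nextIdx, him] using hadj
  · rintro ⟨u, p, hp⟩ ⟨u', p', hp'⟩ hpp
    simp only [Set.mem_ofPred_eq] at hp hp'
    have hv : ∀ i : Fin m, p.getVert i = p'.getVert i := fun i =>
      congrFun (congrArg Subtype.val hpp) i
    obtain rfl : u = u' := by simpa using hv ⟨0, hm⟩
    obtain rfl : p = p' := by
      refine SimpleGraph.Walk.ext_getVert_le_length (hp.trans hp'.symm) fun i hi => ?_
      rcases Nat.lt_or_ge i m with him | him
      · exact hv ⟨i, him⟩
      · rw [p.getVert_of_length_le (by omega), p'.getVert_of_length_le (by omega)]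
    rfl

/-- **Many homomorphic cycles in bipartite graphs with minimum degree conditions.**
If `G` is bipartite with parts `X` and `Y`, every vertex of `X` has degree at
least `s` and every vertex of `Y` has degree at least `t`, then
`hom(C_{2k}, G) ≥ s^k · t^k` for every positive integer `k`. -/
theorem homCycles_ge_of_bipartite_min_degrees
    (V : Type) [Fintype V] (G : SimpleGraph V) (X Y : Set V)
    (hdisj : Disjoint X Y) (hcover : X ∪ Y = Set.univ)
    (hX : X.Nonempty) (hY : Y.Nonempty)
    (hbip : ∀ u v : V, G.Adj u v → (u ∈ X ∧ v ∈ Y) ∨ (u ∈ Y ∧ v ∈ X))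
    (s t : ℝ) (hs : 0 ≤ s) (ht : 0 ≤ t)
    (hdX : ∀ x ∈ X, s ≤ (Nat.card (G.neighborSet x) : ℝ))
    (hdY : ∀ y ∈ Y, t ≤ (Nat.card (G.neighborSet y) : ℝ))
    (k : ℕ) (hk : 0 < k) :
    s ^ k * t ^ k ≤ (homCycles G (2 * k) : ℝ) := by
  classical
  set A := G.adjMatrix ℝ with hA
  have hsymm : A.IsHermitian := by
    rw [Matrix.IsHermitian, Matrix.conjTranspose_eq_transpose_of_trivial, hA,
      SimpleGraph.transpose_adjMatrix]
  set v : V → ℝ := X.indicator 1 with hv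
  have hv0 : v ≠ 0 := by
    obtain ⟨x, hx⟩ := hX
    intro h0
    simpa [hv, hx] using congrFun h0 x
  have hdeg : ∀ z, ∑ y, A y z = (Nat.card (G.neighborSet z) : ℝ) := by
    intro z
    rw [Nat.card_eq_fintype_card, SimpleGraph.card_neighborSet_eq_degree]
    simp [hA, SimpleGraph.adjMatrix_apply, G.adj_comm _ z, 
      ← SimpleGraph.card_neighborFinset_eq_degree,
      SimpleGraph.neighborFinset_eq_filter]
  have hAX : ∀ x ∈ X, A.mulVec v x = 0 := by
    intro x hx
    refine Finset.sum_eq_zero fun z _ => ?_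
    by_cases hz : z ∈ X
    · have : ¬ G.Adj x z := fun hadj => by
        rcases hbip x z hadj with h | h
        · exact hdisj.notMem_of_mem_left hz h.2
        · exact hdisj.notMem_of_mem_left hx h.1
      simp [hA, this]
    · simp [hv, hz]
  have hAY : ∀ y ∈ Y, A.mulVec v y = (Nat.card (G.neighborSet y) : ℝ) := by
    intro y hy
    rw [← hdeg]
    refine Finset.sum_congr rfl fun z _ => ?_
    by_cases hadj : G.Adj y z
    · have hz : z ∈ X := by
        rcases hbip y z hadj with h | h
        · exact absurd hy (hdisj.notMem_of_mem_left h.1)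
        · exact h.2
      simp [hA, hadj, hadj.symm, hv, hz]
    · have hadj' : ¬ G.Adj z y := fun h => hadj h.symm
      simp [hA, hadj, hadj']
  have hray : s * t * (v ⬝ᵥ v) ≤ A.mulVec v ⬝ᵥ A.mulVec v := by
    calc s * t * (v ⬝ᵥ v) = t * ∑ z, s * v z := by
          have : v ⬝ᵥ v = ∑ z, v z := Finset.sum_congr rfl fun z _ => by
            by_cases hz : z ∈ X <;> simp [hv, hz]
          rw [this, ← Finset.mul_sum]
          ring
      _ ≤ t * ∑ z, (∑ y, A y z) * v z := by
          refine mul_le_mul_of_nonneg_left (Finset.sum_le_sum fun z _ => ?_) ht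
          by_cases hz : z ∈ X
          · simpa [hv, hz, hdeg] using hdX z hz
          · simp [hv, hz]
      _ = ∑ y, t * A.mulVec v y := by
          simp only [Finset.sum_mul]
          rw [Finset.sum_comm, Finset.mul_sum]
          rfl
      _ ≤ A.mulVec v ⬝ᵥ A.mulVec v := by
          refine Finset.sum_le_sum fun y _ => ?_
          rcases (hcover ▸ Set.mem_univ y : y ∈ X ∪ Y) with hy | hy
          · simp [hAX y hy]
          · rw [hAY y hy]
            exact mul_le_mul_of_nonneg_right (hdY y hy) (Nat.cast_nonneg _)
  rw [← mul_pow]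
  exact (pow_le_trace_pow hsymm v hv0 (mul_nonneg hs ht) hray k).trans
    (trace_adjMatrix_pow_le_homCycles G (by omega))
end
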